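/- arXiv:1905.00605 — 2 statements merged into one kernel-verified Lean document; each statement's English description precedes it below -/
import Mathlib

section
/- Let X be a real Banach space that is both ρ-convex and σ-smooth, and let σ ≤ p ≤ ρ. Then for every R > 0 there exists a constant C > 0 such that D_p(x,y) ≤ C · D_p(y,x)^{σ/ρ} for all x, y ∈ X with ‖x‖ < R and ‖y‖ < R. -/
open Filter Topology

noncomputable section

/-- The modulus of convexity of a normed space `X`. -/
def modConvex (X : Type*) [NormedAddCommGroup X] (ε : ℝ) : ℝ :=
  sInf {d : ℝ | ∃ x y : X, ‖x‖ = 1 ∧ ‖y‖ = 1 ∧ ε ≤ ‖x - y‖ ∧ d = 1 - ‖x + y‖ / 2}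

/-- The modulus of smoothness of a normed space `X`. -/
def modSmooth (X : Type*) [NormedAddCommGroup X] [NormedSpace ℝ X] (τ : ℝ) : ℝ :=
  sSup {d : ℝ | ∃ x y : X, ‖x‖ = 1 ∧ ‖y‖ = 1 ∧ d = (‖x + τ • y‖ + ‖x - τ • y‖) / 2 - 1}

/-- `X` is uniformly convex: the modulus of convexity is positive for positive ε. -/
def UnifConvex (X : Type*) [NormedAddCommGroup X] : Prop :=
  ∀ ε : ℝ, 0 < ε → ε ≤ 2 → 0 < modConvex X ε

/-- `X` is uniformly smooth: `ρ_X(τ)/τ → 0` as `τ → 0⁺`. -/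
def UnifSmooth (X : Type*) [NormedAddCommGroup X] [NormedSpace ℝ X] : Prop :=
  Tendsto (fun τ => modSmooth X τ / τ) (𝓝[>] (0 : ℝ)) (𝓝 0)

/-- `X` is uniformly convex of power type `ρ`. -/
def PowerConvex (X : Type*) [NormedAddCommGroup X] (ρ : ℝ) : Prop :=
  ∃ c > (0 : ℝ), ∀ ε ∈ Set.Icc (0 : ℝ) 2, c * ε ^ ρ ≤ modConvex X ε

/-- `X` is uniformly smooth of power type `σ` (with `σ > 1`). -/
def PowerSmooth (X : Type*) [NormedAddCommGroup X] [NormedSpace ℝ X] (σ : ℝ) : Prop :=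
  1 < σ ∧ ∃ C > (0 : ℝ), ∀ τ ∈ Set.Icc (0 : ℝ) 1, modSmooth X τ ≤ C * τ ^ σ

variable {X : Type*} [NormedAddCommGroup X] [NormedSpace ℝ X]

/-- The duality mapping `j_p`, the Fréchet derivative of `x ↦ (1/p)‖x‖^p`. -/
def dualityMap (p : ℝ) (x : X) : X →L[ℝ] ℝ :=
  fderiv ℝ (fun y : X => 1 / p * ‖y‖ ^ p) x

/-- The Bregman distance `D_p(x, y)`. -/
def bregmanDist (p : ℝ) (x y : X) : ℝ :=
  1 / p * ‖x‖ ^ p - 1 / p * ‖y‖ ^ p - dualityMap p y (x - y)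

/-- The Bregman projection of `x` onto the set `S`: the minimizer of `m ↦ D_p(m, x)` over `S`. -/
def bregmanProj (p : ℝ) (S : Set X) (x : X) : X :=
  letI : Nonempty X := ⟨x⟩
  Classical.epsilon fun y => y ∈ S ∧ ∀ m ∈ S, bregmanDist p y x ≤ bregmanDist p m x

/-- The Bregman distance `D_p(S, x)` from the point `x` to the set `S`. -/
def bregmanDistSet (p : ℝ) (S : Set X) (x : X) : ℝ :=
  bregmanDist p (bregmanProj p S x) x

/-- The metric projection of `x` onto the set `S`: the point of `S` nearest to `x`. -/
def metricProj (S : Set X) (x : X) : X :=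
  letI : Nonempty X := ⟨x⟩
  Classical.epsilon fun y => y ∈ S ∧ ∀ m ∈ S, ‖x - y‖ ≤ ‖x - m‖

/-!
Write `a = ‖x‖`, `b = ‖y‖`, `M = max a b`, and let `w` be the distance between the normalizations
of `x` and `y`. The Bregman distance `D x y` splits into the scalar Bregman distance of `t ^ p / p`
between `a` and `b`, which is symmetric up to a constant, and a nonnegative angular part
`b ^ (p - 1) * (a - f x)`, where `f` is the norming functional of `y`. Smoothness of power type `σ`
bounds the angular part above by a multiple of `M ^ p * w ^ σ`. Convexity of power type `ρ` bounds
it below by a multiple of `M ^ p * w ^ ρ` when `a` and `b` are comparable, and otherwise the scalar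
part alone is of order `M ^ p`; since `M` and `w` are symmetric in `x` and `y`, in all cases
`M ^ p * w ^ ρ ≲ D y x`. Both parts of `D x y` are then dominated by
`(M ^ p) ^ (1 - σ / ρ) * (D y x) ^ (σ / ρ)`.
-/

section RealPowers

lemma le_rpow_mul_rpow_of_le {a b d s : ℝ} (ha : 0 ≤ a) (hab : a ≤ b) (had : a ≤ d)
    (hs₀ : 0 ≤ s) (hs₁ : s ≤ 1) : a ≤ b ^ (1 - s) * d ^ s := by
  have : 0 ≤ 1 - s := sub_nonneg.2 hs₁
  have split : a = a ^ (1 - s) * a ^ s := by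
    rw [← Real.rpow_add' ha (by simp), sub_add_cancel, Real.rpow_one]
  calc a = a ^ (1 - s) * a ^ s := split
    _ ≤ b ^ (1 - s) * d ^ s := by
        have hb : 0 ≤ b := ha.trans hab
        gcongr

lemma min_one_half_rpow_mul_rpow_le {r s t : ℝ} (hs : 0 < s) (hst : s / 2 ≤ t) (hts : t ≤ s) :
    min 1 ((1 / 2) ^ r) * s ^ r ≤ t ^ r := by
  rcases le_total 0 r with hr | hr
  · calc min 1 ((1 / 2) ^ r) * s ^ r ≤ (1 / 2) ^ r * s ^ r := by gcongr; exact min_le_right _ _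
      _ = (s / 2) ^ r := by rw [← Real.mul_rpow (by norm_num) hs.le]; ring_nf
      _ ≤ t ^ r := by gcongr
  · calc min 1 ((1 / 2) ^ r) * s ^ r ≤ 1 * s ^ r := by gcongr; exact min_le_left _ _
      _ = s ^ r := one_mul _
      _ ≤ t ^ r := Real.rpow_le_rpow_of_nonpos (by linarith) hts hr

lemma rpow_sub_two_mul_sq {r s : ℝ} (hs : 0 ≤ s) (hr : r ≠ 0) :
    s ^ (r - 2) * s ^ 2 = s ^ r := by
  rw [← Real.rpow_add_natCast' hs (by simpa), Nat.cast_ofNat, sub_add_cancel]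

lemma rpow_sub_one_mul_le_max_rpow {p a b : ℝ} (hp : 1 ≤ p) (ha : 0 ≤ a) (hb : 0 ≤ b) :
    b ^ (p - 1) * a ≤ max a b ^ p := by
  have hmax : 0 ≤ max a b := le_max_of_le_left ha
  have : 0 ≤ p - 1 := sub_nonneg.2 hp
  calc b ^ (p - 1) * a ≤ max a b ^ (p - 1) * max a b := by
        gcongr
        · exact le_max_right _ _
        · exact le_max_left _ _
    _ = max a b ^ p := by
        rw [← Real.rpow_add_one' hmax (by linarith), sub_add_cancel]

lemma min_one_mul_one_sub_le_one_sub_rpow {q t : ℝ} (hq : 0 < q) (ht₀ : 0 ≤ t) (ht₁ : t ≤ 1) :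
    min 1 q * (1 - t) ≤ 1 - t ^ q := by
  rcases le_total 1 q with h | h
  · rw [min_eq_left h]
    linarith [Real.rpow_le_self_of_le_one ht₀ ht₁ h]
  · have bernoulli := rpow_one_add_le_one_add_mul_self (s := t - 1) (by linarith) hq.le h
    rw [add_sub_cancel] at bernoulli
    rw [min_eq_right h]
    linarith

lemma one_sub_rpow_le_max_one_mul_one_sub {q t : ℝ} (ht₀ : 0 ≤ t) (ht₁ : t ≤ 1) :
    1 - t ^ q ≤ max 1 q * (1 - t) := by
  rcases le_total 1 q with h | h
  · have bernoulli := one_add_mul_self_le_rpow_one_add (s := t - 1) (by linarith) h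
    rw [add_sub_cancel] at bernoulli
    rw [max_eq_right h]
    linarith
  · rw [max_eq_left h]
    linarith [Real.self_le_rpow_of_le_one ht₀ ht₁ h]

lemma min_one_mul_le_rpow_sub_rpow_mul_sub {q a b : ℝ} (hq : 0 < q) (ha : 0 ≤ a) (hb : 0 ≤ b) :
    min 1 q * (max a b ^ (q - 1) * (a - b) ^ 2) ≤ (a ^ q - b ^ q) * (a - b) := by
  wlog hba : b ≤ a generalizing a b
  · rw [max_comm]
    linarith [this hb ha (le_of_not_ge hba)]
  rw [max_eq_left hba]
  rcases ha.eq_or_lt with rfl | ha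
  · simp [le_antisymm hba hb]
  have bound := min_one_mul_one_sub_le_one_sub_rpow hq (by positivity) ((div_le_one ha).2 hba)
  rw [Real.div_rpow hb ha.le] at bound
  calc min 1 q * (a ^ (q - 1) * (a - b) ^ 2)
      = a ^ q * (min 1 q * (1 - b / a)) * (a - b) := by
        rw [Real.rpow_sub_one ha.ne']; field_simp
    _ ≤ a ^ q * (1 - b ^ q / a ^ q) * (a - b) := by gcongr
    _ = (a ^ q - b ^ q) * (a - b) := by field_simp

lemma rpow_sub_rpow_mul_sub_le_max_one_mul {q a b : ℝ} (ha : 0 ≤ a) (hb : 0 ≤ b) :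
    (a ^ q - b ^ q) * (a - b) ≤ max 1 q * (max a b ^ (q - 1) * (a - b) ^ 2) := by
  wlog hba : b ≤ a generalizing a b
  · rw [max_comm a]
    linarith [this hb ha (le_of_not_ge hba)]
  rw [max_eq_left hba]
  rcases ha.eq_or_lt with rfl | ha
  · simp [le_antisymm hba hb]
  have bound := one_sub_rpow_le_max_one_mul_one_sub (q := q) (by positivity) ((div_le_one ha).2 hba)
  rw [Real.div_rpow hb ha.le] at bound
  calc (a ^ q - b ^ q) * (a - b)
      = a ^ q * (1 - b ^ q / a ^ q) * (a - b) := by field_simp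
    _ ≤ a ^ q * (max 1 q * (1 - b / a)) * (a - b) := by gcongr
    _ = max 1 q * (a ^ (q - 1) * (a - b) ^ 2) := by
        rw [Real.rpow_sub_one ha.ne']; field_simp

end RealPowers

section ScalarBregman

/-- The Bregman distance on `[0, ∞)` of the function `t ↦ t ^ p / p`. It is the part of
`bregmanDist p x y` that depends only on `a = ‖x‖` and `b = ‖y‖`. -/
def powBregman (p a b : ℝ) : ℝ :=
  1 / p * a ^ p - 1 / p * b ^ p - b ^ (p - 1) * (a - b)

lemma powBregman_three_point (p a m b : ℝ) :
    powBregman p a b =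
      powBregman p a m + powBregman p m b + (m ^ (p - 1) - b ^ (p - 1)) * (a - m) := by
  unfold powBregman
  ring

lemma powBregman_add_swap (p a b : ℝ) :
    powBregman p a b + powBregman p b a = (a ^ (p - 1) - b ^ (p - 1)) * (a - b) := by
  unfold powBregman
  ring

variable {p : ℝ} (hp : 1 < p)
include hp

lemma powBregman_nonneg {a b : ℝ} (ha : 0 ≤ a) (hb : 0 ≤ b) : 0 ≤ powBregman p a b := by
  have hp₀ : p ≠ 0 := by linarith
  have hp₁ : p - 1 ≠ 0 := by linarith
  have young := Real.young_inequality_of_nonneg ha (Real.rpow_nonneg hb (p - 1))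
    (Real.HolderConjugate.conjExponent hp)
  have pow_pow : (b ^ (p - 1)) ^ Real.conjExponent p = b ^ p := by
    rw [← Real.rpow_mul hb, Real.conjExponent, mul_div_cancel₀ _ hp₁]
  have pow_mul : b ^ (p - 1) * b = b ^ p := by
    rw [← Real.rpow_add_one' hb (by simpa using hp₀), sub_add_cancel]
  have conj : b ^ p / Real.conjExponent p = b ^ p - 1 / p * b ^ p := by
    rw [Real.conjExponent]; field_simp
  rw [pow_pow, conj] at young
  rw [powBregman, mul_sub, pow_mul]
  linarith [one_div_mul_eq_div p (a ^ p)]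

lemma powBregman_le {a b : ℝ} (ha : 0 ≤ a) (hb : 0 ≤ b) :
    powBregman p a b ≤ max 1 (p - 1) * (max a b ^ (p - 2) * (a - b) ^ 2) := by
  have bound := rpow_sub_rpow_mul_sub_le_max_one_mul (q := p - 1) ha hb
  rw [← powBregman_add_swap, show p - 1 - 1 = p - 2 by ring] at bound
  linarith [powBregman_nonneg hp hb ha]

lemma exists_mul_le_powBregman :
    ∃ c > 0, ∀ {a b : ℝ}, 0 ≤ a → 0 ≤ b →
      c * (max a b ^ (p - 2) * (a - b) ^ 2) ≤ powBregman p a b := by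
  have hp' : 0 < p - 1 := sub_pos.2 hp
  set c₁ : ℝ := min 1 (p - 1)
  set c₂ : ℝ := min 1 ((1 / 2) ^ (p - 2))
  have : 0 < c₁ := lt_min one_pos hp'
  have : 0 < c₂ := lt_min one_pos (by positivity)
  refine ⟨c₁ * c₂ / 4, by positivity, fun {a b} ha hb => ?_⟩
  rcases (le_max_of_le_left ha : 0 ≤ max a b).eq_or_lt with h | hpos
  · have ha₀ : a = 0 := le_antisymm (h ▸ le_max_left _ _) ha
    have hb₀ : b = 0 := le_antisymm (h ▸ le_max_right _ _) hb
    simpa [ha₀, hb₀] using powBregman_nonneg hp le_rfl le_rfl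
  -- Three-point identity at the midpoint: its cross term alone has the required order.
  set m := (a + b) / 2 with hm
  have hm₀ : 0 ≤ m := by positivity
  have max_lower : max a b / 2 ≤ max m b := by
    rcases max_cases a b with ⟨h, -⟩ | ⟨h, -⟩ <;> rw [h]
    · exact le_max_of_le_left (by linarith)
    · exact le_max_of_le_right (by linarith)
  have max_upper : max m b ≤ max a b :=
    max_le (by linarith [le_max_left a b, le_max_right a b]) (le_max_right _ _)
  have bound := min_one_mul_le_rpow_sub_rpow_mul_sub hp' hm₀ hb
  rw [show p - 1 - 1 = p - 2 by ring] at bound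
  calc c₁ * c₂ / 4 * (max a b ^ (p - 2) * (a - b) ^ 2)
      = c₁ * (c₂ * max a b ^ (p - 2) * (m - b) ^ 2) := by rw [hm]; ring
    _ ≤ c₁ * (max m b ^ (p - 2) * (m - b) ^ 2) := by
        gcongr; exact min_one_half_rpow_mul_rpow_le hpos max_lower max_upper
    _ ≤ (m ^ (p - 1) - b ^ (p - 1)) * (m - b) := bound
    _ = (m ^ (p - 1) - b ^ (p - 1)) * (a - m) := by rw [hm]; ring
    _ ≤ powBregman p a b := by
        rw [powBregman_three_point p a m b]
        linarith [powBregman_nonneg hp ha hm₀, powBregman_nonneg hp hm₀ hb]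

lemma exists_powBregman_le_mul_swap :
    ∃ K > 0, ∀ {a b : ℝ}, 0 ≤ a → 0 ≤ b → powBregman p a b ≤ K * powBregman p b a := by
  obtain ⟨c, hc, lower⟩ := exists_mul_le_powBregman hp
  refine ⟨max 1 (p - 1) / c, by positivity, fun {a b} ha hb => ?_⟩
  calc powBregman p a b ≤ max 1 (p - 1) * (max a b ^ (p - 2) * (a - b) ^ 2) :=
        powBregman_le hp ha hb
    _ = max 1 (p - 1) / c * (c * (max b a ^ (p - 2) * (b - a) ^ 2)) := by
        rw [max_comm a, ← neg_sub b a, neg_sq]; field_simp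
    _ ≤ max 1 (p - 1) / c * powBregman p b a := by gcongr; exact lower hb ha

lemma powBregman_le_mul_max_rpow {a b : ℝ} (ha : 0 ≤ a) (hb : 0 ≤ b) :
    powBregman p a b ≤ max 1 (p - 1) * max a b ^ p := by
  have hmax : 0 ≤ max a b := le_max_of_le_left ha
  refine (powBregman_le hp ha hb).trans ?_
  rw [← rpow_sub_two_mul_sq (r := p) hmax (zero_lt_one.trans hp).ne']
  have abs_le : |a - b| ≤ max a b := abs_sub_le_iff.2
    ⟨by linarith [le_max_left a b], by linarith [le_max_right a b]⟩
  gcongr max 1 (p - 1) * (_ * ?_)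
  exact sq_le_sq.2 (abs_le.trans (le_abs_self _))

lemma exists_mul_max_rpow_le_powBregman :
    ∃ c > 0, ∀ {a b : ℝ}, 0 ≤ a → 0 ≤ b → max a b ≤ 2 * |a - b| →
      c * max a b ^ p ≤ powBregman p a b := by
  obtain ⟨c, hc, lower⟩ := exists_mul_le_powBregman hp
  refine ⟨c / 4, by positivity, fun {a b} ha hb hab => ?_⟩
  have hmax : 0 ≤ max a b := le_max_of_le_left ha
  calc c / 4 * max a b ^ p = c * (max a b ^ (p - 2) * (max a b ^ 2 / 4)) := by
        rw [← rpow_sub_two_mul_sq (r := p) hmax (zero_lt_one.trans hp).ne']; ring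
    _ ≤ c * (max a b ^ (p - 2) * (a - b) ^ 2) := by
        gcongr
        rw [← sq_abs (a - b)]
        nlinarith
    _ ≤ powBregman p a b := lower ha hb

end ScalarBregman

section SupportFunctionals

open NormedSpace (normalize norm_smul_normalize norm_normalize)

lemma apply_le_norm_of_norm_le_one {f : X →L[ℝ] ℝ} (hf : ‖f‖ ≤ 1) (x : X) : f x ≤ ‖x‖ := by
  simpa using (le_abs_self _).trans (f.le_of_opNorm_le hf x)

lemma norm_sub_apply_eq_norm_mul (f : X →L[ℝ] ℝ) (x : X) :
    ‖x‖ - f x = ‖x‖ * (1 - f (normalize x)) := by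
  rw [mul_sub, mul_one, ← smul_eq_mul, ← map_smul, norm_smul_normalize]

lemma apply_normalize_eq_one {f : X →L[ℝ] ℝ} {x : X} (hx : x ≠ 0) (hfx : f x = ‖x‖) :
    f (normalize x) = 1 := by
  rw [NormedSpace.normalize, map_smul, hfx, smul_eq_mul, inv_mul_cancel₀ (norm_ne_zero_iff.2 hx)]

lemma norm_normalize_sub_normalize_le (x y : X) : ‖normalize x - normalize y‖ ≤ 2 := by
  have norm_le (z : X) : ‖normalize z‖ ≤ 1 := by
    by_cases hz : z = 0
    · simp [hz]
    · exact (norm_normalize hz).le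
  linarith [norm_sub_le (normalize x) (normalize y), norm_le x, norm_le y]

lemma two_mul_modConvex_le_one_sub {f : X →L[ℝ] ℝ} (hf : ‖f‖ ≤ 1) {u v : X} (hu : ‖u‖ = 1)
    (hv : ‖v‖ = 1) (hfv : f v = 1) : 2 * modConvex X ‖u - v‖ ≤ 1 - f u := by
  have modConvex_le : modConvex X ‖u - v‖ ≤ 1 - ‖u + v‖ / 2 := by
    refine csInf_le ⟨0, ?_⟩ ⟨u, v, hu, hv, le_rfl, rfl⟩
    rintro _ ⟨x, y, hx, hy, -, rfl⟩
    linarith [norm_add_le x y]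
  have sum_le := apply_le_norm_of_norm_le_one hf (u + v)
  rw [map_add, hfv] at sum_le
  linarith

lemma modSmooth_nonneg (τ : ℝ) : 0 ≤ modSmooth X τ := by
  refine Real.sSup_nonneg ?_
  rintro _ ⟨x, y, hx, -, rfl⟩
  have two_mul_norm_le := norm_add_le (x + τ • y) (x - τ • y)
  rw [add_add_sub_cancel, ← two_smul ℝ x, norm_smul, hx, Real.norm_ofNat] at two_mul_norm_le
  linarith

lemma norm_add_add_norm_sub_le_modSmooth {u h : X} (hu : ‖u‖ = 1) (hh : h ≠ 0) :
    ‖u + h‖ + ‖u - h‖ - 2 ≤ 2 * modSmooth X ‖h‖ := by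
  have le_modSmooth : (‖u + h‖ + ‖u - h‖) / 2 - 1 ≤ modSmooth X ‖h‖ := by
    refine le_csSup ⟨‖h‖, ?_⟩ ⟨u, normalize h, hu, norm_normalize hh, ?_⟩
    · rintro _ ⟨x, y, hx, hy, rfl⟩
      have add_le := norm_add_le x (‖h‖ • y)
      have sub_le := norm_sub_le x (‖h‖ • y)
      rw [norm_smul, norm_norm, hx, hy] at add_le sub_le
      linarith
    · rw [norm_smul_normalize]
  linarith

lemma norm_add_sub_one_sub_apply_le {f : X →L[ℝ] ℝ} (hf : ‖f‖ ≤ 1) {u : X} (hu : ‖u‖ = 1)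
    (hfu : f u = 1) (h : X) : ‖u + h‖ - 1 - f h ≤ 2 * modSmooth X ‖h‖ := by
  by_cases hh : h = 0
  · simpa [hh, hu] using modSmooth_nonneg (X := X) 0
  have apply_sub_le := apply_le_norm_of_norm_le_one hf (u - h)
  rw [map_sub, hfu] at apply_sub_le
  linarith [norm_add_add_norm_sub_le_modSmooth hu hh]

lemma PowerSmooth.exists_one_sub_apply_le {σ : ℝ} (hX : PowerSmooth X σ) :
    ∃ K > 0, ∀ {f : X →L[ℝ] ℝ} {u v : X}, ‖f‖ ≤ 1 → ‖u‖ = 1 → ‖v‖ = 1 → f v = 1 →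
      1 - f u ≤ K * ‖u - v‖ ^ σ := by
  obtain ⟨hσ, C, -, modSmooth_le⟩ := hX
  refine ⟨max 1 (2 * C), by positivity, fun {f u v} hf hu hv hfv => ?_⟩
  rcases le_total ‖u - v‖ 1 with hw | hw
  · have expand := norm_add_sub_one_sub_apply_le hf hv hfv (u - v)
    rw [add_sub_cancel, hu, map_sub, hfv] at expand
    calc 1 - f u ≤ 2 * modSmooth X ‖u - v‖ := by linarith
      _ ≤ 2 * (C * ‖u - v‖ ^ σ) := by gcongr; exact modSmooth_le _ ⟨norm_nonneg _, hw⟩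
      _ = 2 * C * ‖u - v‖ ^ σ := (mul_assoc _ _ _).symm
      _ ≤ max 1 (2 * C) * ‖u - v‖ ^ σ := by gcongr; exact le_max_right _ _
  · calc 1 - f u = f (v - u) := by rw [map_sub, hfv]
      _ ≤ ‖u - v‖ := norm_sub_rev u v ▸ apply_le_norm_of_norm_le_one hf (v - u)
      _ ≤ ‖u - v‖ ^ σ := Real.self_le_rpow_of_one_le hw hσ.le
      _ ≤ max 1 (2 * C) * ‖u - v‖ ^ σ := le_mul_of_one_le_left (by positivity) (le_max_left _ _)

lemma PowerSmooth.unifSmooth {σ : ℝ} (hX : PowerSmooth X σ) : UnifSmooth X := by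
  obtain ⟨hσ, C, -, hC⟩ := hX
  have pow_tendsto : Tendsto (fun τ : ℝ => C * τ ^ (σ - 1)) (𝓝[>] 0) (𝓝 0) := by
    have cont : ContinuousAt (fun τ : ℝ => C * τ ^ (σ - 1)) 0 :=
      continuousAt_const.mul (continuousAt_id.rpow_const (Or.inr (by linarith)))
    simpa [Real.zero_rpow (sub_ne_zero.2 hσ.ne')] using cont.tendsto.mono_left nhdsWithin_le_nhds
  refine squeeze_zero' ?_ ?_ pow_tendsto
  · filter_upwards [self_mem_nhdsWithin] with τ hτ
    exact div_nonneg (modSmooth_nonneg τ) (le_of_lt hτ)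
  · filter_upwards [Ioc_mem_nhdsGT one_pos] with τ hτ
    rw [div_le_iff₀ hτ.1, mul_assoc, ← Real.rpow_add_one hτ.1.ne', sub_add_cancel]
    exact hC τ ⟨hτ.1.le, hτ.2⟩

lemma UnifSmooth.modSmooth_norm_isLittleO (hX : UnifSmooth X) :
    (fun h : X => modSmooth X ‖h‖) =o[𝓝[≠] 0] fun h => h := by
  refine Asymptotics.IsLittleO.of_norm_right ?_
  refine (Asymptotics.isLittleO_of_tendsto' ?_ hX).comp_tendsto tendsto_norm_nhdsNE_zero
  filter_upwards [self_mem_nhdsWithin] with τ hτ hτ'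
  exact absurd hτ' (ne_of_gt hτ)

lemma UnifSmooth.hasFDerivAt_norm (hX : UnifSmooth X) {f : X →L[ℝ] ℝ} (hf : ‖f‖ ≤ 1) {u : X}
    (hu : ‖u‖ = 1) (hfu : f u = 1) : HasFDerivAt (fun x : X => ‖x‖) f u := by
  rw [hasFDerivAt_iff_isLittleO_nhds_zero, ← nhdsNE_sup_pure, Asymptotics.isLittleO_sup]
  refine ⟨(Asymptotics.IsBigO.of_bound 1 ?_).trans_isLittleO
    (hX.modSmooth_norm_isLittleO.const_mul_left 2), Asymptotics.isLittleO_pure.2 (by simp)⟩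
  refine .of_forall fun h => ?_
  have lower := apply_le_norm_of_norm_le_one hf (u + h)
  rw [map_add, hfu] at lower
  have upper := norm_add_sub_one_sub_apply_le hf hu hfu h
  rw [hu, one_mul, Real.norm_of_nonneg (by linarith)]
  exact upper.trans (le_abs_self _)

lemma UnifSmooth.differentiableAt_norm (hX : UnifSmooth X) {y : X} (hy : y ≠ 0) :
    DifferentiableAt ℝ (fun x : X => ‖x‖) y := by
  obtain ⟨f, hf, hfy⟩ := exists_dual_vector ℝ y (norm_ne_zero_iff.2 hy)
  have normalize_deriv := hX.hasFDerivAt_norm hf.le (norm_normalize hy)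
    (apply_normalize_eq_one hy hfy)
  have deriv := normalize_deriv.hasFDerivAt_norm_smul_pos (norm_pos_iff.2 hy)
  rw [norm_smul_normalize] at deriv
  exact deriv.differentiableAt

end SupportFunctionals

section BregmanDist

open NormedSpace (normalize norm_smul_normalize norm_normalize)

lemma norm_fderiv_norm_le_one (y : X) : ‖fderiv ℝ (fun z : X => ‖z‖) y‖ ≤ 1 := by
  simpa using norm_fderiv_le_of_lipschitz ℝ (lipschitzWith_one_norm (E := X)) (x₀ := y)

lemma UnifSmooth.fderiv_norm_self (hX : UnifSmooth X) (y : X) :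
    fderiv ℝ (fun z : X => ‖z‖) y y = ‖y‖ := by
  by_cases hy : y = 0
  · simp [hy]
  · exact (hX.differentiableAt_norm hy).fderiv_norm_self

lemma UnifSmooth.dualityMap_eq (hX : UnifSmooth X) {p : ℝ} (hp : 1 < p) (y : X) :
    dualityMap p y = ‖y‖ ^ (p - 1) • fderiv ℝ (fun z : X => ‖z‖) y := by
  have hp₀ : 0 < p := zero_lt_one.trans hp
  by_cases hy : y = 0
  · have isMin : IsLocalMin (fun z : X => 1 / p * ‖z‖ ^ p) 0 := .of_forall fun z => by
      simp only [norm_zero, Real.zero_rpow hp₀.ne', mul_zero]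
      positivity
    rw [hy, dualityMap, isMin.fderiv_eq_zero, norm_zero, Real.zero_rpow (sub_pos.2 hp).ne',
      zero_smul]
  · have deriv := ((hX.differentiableAt_norm hy).hasFDerivAt.rpow_const (p := p)
      (Or.inl (norm_ne_zero_iff.2 hy))).const_mul (1 / p)
    rw [dualityMap, deriv.fderiv, smul_smul, ← mul_assoc, one_div_mul_cancel hp₀.ne', one_mul]

/-- The part of `bregmanDist p x y` that vanishes when `x` is a nonnegative multiple of `y`. In a
smooth space the derivative of the norm at `y ≠ 0` is the norm-one functional attaining its norm at
`y`; at `y = 0` it is the junk value `0`, which the factor `‖y‖ ^ (p - 1)` makes harmless. -/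
def angularBregman (p : ℝ) (x y : X) : ℝ :=
  ‖y‖ ^ (p - 1) * (‖x‖ - fderiv ℝ (fun z : X => ‖z‖) y x)

lemma angularBregman_nonneg (p : ℝ) (x y : X) : 0 ≤ angularBregman p x y :=
  mul_nonneg (by positivity)
    (sub_nonneg.2 (apply_le_norm_of_norm_le_one (norm_fderiv_norm_le_one y) x))

lemma angularBregman_eq_mul (p : ℝ) (x y : X) :
    angularBregman p x y =
      ‖y‖ ^ (p - 1) * (‖x‖ * (1 - fderiv ℝ (fun z : X => ‖z‖) y (normalize x))) := by
  rw [angularBregman, norm_sub_apply_eq_norm_mul]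

lemma UnifSmooth.bregmanDist_eq (hX : UnifSmooth X) {p : ℝ} (hp : 1 < p) (x y : X) :
    bregmanDist p x y = powBregman p ‖x‖ ‖y‖ + angularBregman p x y := by
  rw [bregmanDist, powBregman, angularBregman, hX.dualityMap_eq hp, smul_apply, map_sub,
    hX.fderiv_norm_self, smul_eq_mul]
  ring

lemma UnifSmooth.powBregman_le_bregmanDist (hX : UnifSmooth X) {p : ℝ} (hp : 1 < p) (x y : X) :
    powBregman p ‖x‖ ‖y‖ ≤ bregmanDist p x y := by
  rw [hX.bregmanDist_eq hp]
  exact le_add_of_nonneg_right (angularBregman_nonneg p x y)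

lemma UnifSmooth.bregmanDist_nonneg (hX : UnifSmooth X) {p : ℝ} (hp : 1 < p) (x y : X) :
    0 ≤ bregmanDist p x y :=
  (powBregman_nonneg hp (norm_nonneg x) (norm_nonneg y)).trans
    (hX.powBregman_le_bregmanDist hp x y)

lemma PowerSmooth.exists_angularBregman_le {σ p : ℝ} (hX : PowerSmooth X σ) (hp : 1 < p) :
    ∃ K > 0, ∀ x y : X,
      angularBregman p x y ≤ K * (max ‖x‖ ‖y‖ ^ p * ‖normalize x - normalize y‖ ^ σ) := by
  obtain ⟨K, hK, one_sub_apply_le⟩ := hX.exists_one_sub_apply_le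
  refine ⟨K, hK, fun x y => ?_⟩
  have rhs_nonneg : 0 ≤ K * (max ‖x‖ ‖y‖ ^ p * ‖normalize x - normalize y‖ ^ σ) := by positivity
  by_cases hx : x = 0
  · simpa [angularBregman, hx] using rhs_nonneg
  by_cases hy : y = 0
  · simpa [angularBregman, hy, Real.zero_rpow (sub_pos.2 hp).ne'] using rhs_nonneg
  have unit_bound := one_sub_apply_le (norm_fderiv_norm_le_one y) (norm_normalize hx)
    (norm_normalize hy) (apply_normalize_eq_one hy (hX.unifSmooth.fderiv_norm_self y))
  have norm_bound := rpow_sub_one_mul_le_max_rpow hp.le (norm_nonneg x) (norm_nonneg y)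
  rw [angularBregman_eq_mul]
  calc ‖y‖ ^ (p - 1) * (‖x‖ * (1 - fderiv ℝ (fun z : X => ‖z‖) y (normalize x)))
      ≤ ‖y‖ ^ (p - 1) * (‖x‖ * (K * ‖normalize x - normalize y‖ ^ σ)) := by gcongr
    _ = K * (‖y‖ ^ (p - 1) * ‖x‖ * ‖normalize x - normalize y‖ ^ σ) := by ring
    _ ≤ K * (max ‖x‖ ‖y‖ ^ p * ‖normalize x - normalize y‖ ^ σ) := by gcongr

lemma PowerConvex.exists_le_angularBregman {ρ p : ℝ} (hX : PowerConvex X ρ) (hsmooth : UnifSmooth X)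
    (hp : 1 < p) :
    ∃ c > 0, ∀ x y : X, 2 * |‖x‖ - ‖y‖| < max ‖x‖ ‖y‖ →
      c * (max ‖x‖ ‖y‖ ^ p * ‖normalize x - normalize y‖ ^ ρ) ≤
        angularBregman p x y := by
  obtain ⟨c, hc, le_modConvex⟩ := hX
  refine ⟨2 * c / 2 ^ p, by positivity, fun x y hxy => ?_⟩
  set M := max ‖x‖ ‖y‖
  have hM : 0 < M := (by positivity : (0 : ℝ) ≤ 2 * |‖x‖ - ‖y‖|).trans_lt hxy
  have half_le : M / 2 ≤ ‖x‖ ∧ M / 2 ≤ ‖y‖ := by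
    have := abs_lt.1 (by linarith : |‖x‖ - ‖y‖| < M / 2)
    rcases max_cases ‖x‖ ‖y‖ with ⟨h, -⟩ | ⟨h, -⟩ <;> constructor <;> linarith
  have hx : x ≠ 0 := norm_pos_iff.1 ((half_pos hM).trans_le half_le.1)
  have hy : y ≠ 0 := norm_pos_iff.1 ((half_pos hM).trans_le half_le.2)
  have unit_bound := two_mul_modConvex_le_one_sub (norm_fderiv_norm_le_one y)
    (norm_normalize hx) (norm_normalize hy)
    (apply_normalize_eq_one hy (hsmooth.fderiv_norm_self y))
  have convex_bound := le_modConvex _ ⟨norm_nonneg _, norm_normalize_sub_normalize_le x y⟩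
  rw [angularBregman_eq_mul]
  calc 2 * c / 2 ^ p * (M ^ p * ‖normalize x - normalize y‖ ^ ρ)
      = (M / 2) ^ (p - 1) * (M / 2 * (2 * (c * ‖normalize x - normalize y‖ ^ ρ))) := by
        rw [Real.rpow_sub_one (half_pos hM).ne', Real.div_rpow hM.le zero_le_two]
        field_simp
    _ ≤ ‖y‖ ^ (p - 1) * (‖x‖ * (2 * modConvex X ‖normalize x - normalize y‖)) := by
        have := sub_pos.2 hp
        gcongr
        · exact half_le.2
        · exact half_le.1
    _ ≤ ‖y‖ ^ (p - 1) * (‖x‖ * (1 - fderiv ℝ (fun z : X => ‖z‖) y (normalize x))) := by gcongr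

lemma PowerConvex.exists_le_bregmanDist {ρ p : ℝ} (hX : PowerConvex X ρ) (hρ : 0 ≤ ρ)
    (hsmooth : UnifSmooth X) (hp : 1 < p) :
    ∃ c > 0, ∀ x y : X,
      c * (max ‖x‖ ‖y‖ ^ p * ‖normalize x - normalize y‖ ^ ρ) ≤ bregmanDist p x y := by
  obtain ⟨c₁, hc₁, radial_ge⟩ := exists_mul_max_rpow_le_powBregman hp
  obtain ⟨c₂, hc₂, angular_ge⟩ := hX.exists_le_angularBregman hsmooth hp
  refine ⟨min (c₁ / 2 ^ ρ) c₂, by positivity, fun x y => ?_⟩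
  rcases le_or_gt (max ‖x‖ ‖y‖) (2 * |‖x‖ - ‖y‖|) with hxy | hxy
  · calc min (c₁ / 2 ^ ρ) c₂ * (max ‖x‖ ‖y‖ ^ p * ‖normalize x - normalize y‖ ^ ρ)
        ≤ c₁ / 2 ^ ρ * (max ‖x‖ ‖y‖ ^ p * 2 ^ ρ) := by
          gcongr
          · exact min_le_left _ _
          · exact norm_normalize_sub_normalize_le x y
      _ = c₁ * max ‖x‖ ‖y‖ ^ p := by field_simp
      _ ≤ powBregman p ‖x‖ ‖y‖ := radial_ge (norm_nonneg x) (norm_nonneg y) hxy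
      _ ≤ bregmanDist p x y := hsmooth.powBregman_le_bregmanDist hp x y
  · calc min (c₁ / 2 ^ ρ) c₂ * (max ‖x‖ ‖y‖ ^ p * ‖normalize x - normalize y‖ ^ ρ)
        ≤ c₂ * (max ‖x‖ ‖y‖ ^ p * ‖normalize x - normalize y‖ ^ ρ) := by
          gcongr
          exact min_le_right _ _
      _ ≤ angularBregman p x y := angular_ge x y hxy
      _ ≤ bregmanDist p x y := by
          rw [hsmooth.bregmanDist_eq hp]
          exact le_add_of_nonneg_left (powBregman_nonneg hp (norm_nonneg x) (norm_nonneg y))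

lemma UnifSmooth.exists_powBregman_norm_le_swap_rpow {p s : ℝ} (hX : UnifSmooth X) (hp : 1 < p)
    (hs₀ : 0 ≤ s) (hs₁ : s ≤ 1) :
    ∃ K > 0, ∀ x y : X, powBregman p ‖x‖ ‖y‖ ≤
      K * ((max ‖x‖ ‖y‖ ^ p) ^ (1 - s) * bregmanDist p y x ^ s) := by
  obtain ⟨K, hK, le_swap⟩ := exists_powBregman_le_mul_swap hp
  set L := max 1 (p - 1)
  have hL : 0 < L := by positivity
  refine ⟨L ^ (1 - s) * K ^ s, by positivity, fun x y => ?_⟩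
  have le_dist : powBregman p ‖x‖ ‖y‖ ≤ K * bregmanDist p y x :=
    (le_swap (norm_nonneg x) (norm_nonneg y)).trans
      (mul_le_mul_of_nonneg_left (hX.powBregman_le_bregmanDist hp y x) hK.le)
  calc powBregman p ‖x‖ ‖y‖
      ≤ (L * max ‖x‖ ‖y‖ ^ p) ^ (1 - s) * (K * bregmanDist p y x) ^ s :=
        le_rpow_mul_rpow_of_le (powBregman_nonneg hp (norm_nonneg x) (norm_nonneg y))
          (powBregman_le_mul_max_rpow hp (norm_nonneg x) (norm_nonneg y)) le_dist hs₀ hs₁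
    _ = L ^ (1 - s) * K ^ s * ((max ‖x‖ ‖y‖ ^ p) ^ (1 - s) * bregmanDist p y x ^ s) := by
        rw [Real.mul_rpow hL.le (by positivity), Real.mul_rpow hK.le (hX.bregmanDist_nonneg hp y x)]
        ring

lemma PowerConvex.exists_mul_norm_normalize_sub_rpow_le {ρ σ p : ℝ} (hX : PowerConvex X ρ)
    (hρ : 0 < ρ) (hσ : 0 ≤ σ) (hsmooth : UnifSmooth X) (hp : 1 < p) :
    ∃ K > 0, ∀ x y : X, max ‖x‖ ‖y‖ ^ p * ‖normalize x - normalize y‖ ^ σ ≤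
      K * ((max ‖x‖ ‖y‖ ^ p) ^ (1 - σ / ρ) * bregmanDist p y x ^ (σ / ρ)) := by
  obtain ⟨c, hc, lower⟩ := hX.exists_le_bregmanDist hρ.le hsmooth hp
  have : 0 ≤ σ / ρ := by positivity
  refine ⟨(c⁻¹) ^ (σ / ρ), by positivity, fun x y => ?_⟩
  set T := max ‖x‖ ‖y‖ ^ p
  set w := ‖normalize x - normalize y‖ with hw
  have hT : 0 ≤ T := by positivity
  have lower_swap : T * w ^ ρ ≤ c⁻¹ * bregmanDist p y x := by
    rw [le_inv_mul_iff₀ hc, hw, norm_sub_rev, show T = max ‖y‖ ‖x‖ ^ p by rw [max_comm]]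
    exact lower y x
  calc T * w ^ σ = T ^ (1 - σ / ρ) * (T * w ^ ρ) ^ (σ / ρ) := by
        rw [Real.mul_rpow hT (by positivity), ← mul_assoc, ← Real.rpow_add' hT (by simp),
          sub_add_cancel, Real.rpow_one, ← Real.rpow_mul (norm_nonneg _), mul_div_cancel₀ _ hρ.ne']
    _ ≤ T ^ (1 - σ / ρ) * (c⁻¹ * bregmanDist p y x) ^ (σ / ρ) := by gcongr
    _ = (c⁻¹) ^ (σ / ρ) * (T ^ (1 - σ / ρ) * bregmanDist p y x ^ (σ / ρ)) := by
        rw [Real.mul_rpow (by positivity) (hsmooth.bregmanDist_nonneg hp y x)]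
        ring

theorem exists_bregmanDist_le_max_rpow_mul_swap_rpow {ρ σ p : ℝ} (hconv : PowerConvex X ρ)
    (hsmooth : PowerSmooth X σ) (hp : 1 < p) (hσρ : σ ≤ ρ) :
    ∃ K > 0, ∀ x y : X, bregmanDist p x y ≤
      K * ((max ‖x‖ ‖y‖ ^ p) ^ (1 - σ / ρ) * bregmanDist p y x ^ (σ / ρ)) := by
  have hσ : 0 < σ := zero_lt_one.trans hsmooth.1
  have hρ : 0 < ρ := hσ.trans_le hσρ
  have hX : UnifSmooth X := hsmooth.unifSmooth
  obtain ⟨K₁, hK₁, radial_le⟩ :=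
    hX.exists_powBregman_norm_le_swap_rpow hp (div_nonneg hσ.le hρ.le) ((div_le_one hρ).2 hσρ)
  obtain ⟨K₂, hK₂, angular_le⟩ := hsmooth.exists_angularBregman_le hp
  obtain ⟨K₃, hK₃, interpolation⟩ := hconv.exists_mul_norm_normalize_sub_rpow_le hρ hσ.le hX hp
  refine ⟨K₁ + K₂ * K₃, by positivity, fun x y => ?_⟩
  rw [hX.bregmanDist_eq hp x y, add_mul, mul_assoc]
  exact add_le_add (radial_le x y)
    ((angular_le x y).trans (mul_le_mul_of_nonneg_left (interpolation x y) hK₂.le))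

end BregmanDist

theorem statement2_general (ρ σ p : ℝ) (hconv : PowerConvex X ρ) (hsmooth : PowerSmooth X σ)
    (hp : 1 < p) (hσρ : σ ≤ ρ) :
    ∀ R > (0 : ℝ), ∃ C > (0 : ℝ), ∀ x y : X, ‖x‖ < R → ‖y‖ < R →
      bregmanDist p x y ≤ C * (bregmanDist p y x) ^ (σ / ρ) := by
  intro R hR
  obtain ⟨K, hK, bound⟩ := exists_bregmanDist_le_max_rpow_mul_swap_rpow hconv hsmooth hp hσρ
  refine ⟨K * (R ^ p) ^ (1 - σ / ρ), by positivity, fun x y hx hy => (bound x y).trans ?_⟩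
  have hs : 0 ≤ 1 - σ / ρ :=
    sub_nonneg.2 (div_le_one_of_le₀ hσρ (by linarith [hsmooth.1]))
  have hD : 0 ≤ bregmanDist p y x := hsmooth.unifSmooth.bregmanDist_nonneg hp y x
  rw [mul_assoc]
  gcongr
  exact max_le hx.le hy.le

theorem statement2 {X : Type*} [NormedAddCommGroup X] [NormedSpace ℝ X] [CompleteSpace X]
    (ρ σ p : ℝ) (hconv : PowerConvex X ρ) (hsmooth : PowerSmooth X σ)
    (hp : 1 < p) (hσp : σ ≤ p) (hpρ : p ≤ ρ) :
    ∀ R > (0 : ℝ), ∃ C > (0 : ℝ), ∀ x y : X, ‖x‖ < R → ‖y‖ < R →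
      bregmanDist p x y ≤ C * (bregmanDist p y x) ^ (σ / ρ) :=
  statement2_general ρ σ p hconv hsmooth hp (hσp.trans hpρ)
end
end

section
/- In X = ℝ³ equipped with the ℓ_q norm, where 1 < q < ∞ and q ≠ 2, let M₁ = span{e₁, e₂} and M₂ = span{e₁, e₃}. Then the Bregman projections (with exponent p = q) are Π^q_{M₁}(x,y,z) = (x,y,0), Π^q_{M₂}(x,y,z) = (x,0,z) and Π^q_{M₁∩M₂}(x,y,z) = (x,0,0); the Bregman distances satisfy D_q(M₁, v) = (1−1/q)|z|^q, D_q(M₂, v) = (1−1/q)|y|^q and D_q(M₁∩M₂, v) = (1−1/q)(|y|^q + |z|^q) for v = (x,y,z); consequently D_q(M₁∩M₂, v) ≤ 2 · max{D_q(M₁, v), D_q(M₂, v)} for all v, so the pair (M₁, M₂) is linear Bregman regular. -/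
open Filter Topology

noncomputable section

variable {X : Type*} [NormedAddCommGroup X] [NormedSpace ℝ X]

/-- `ℝ³` equipped with the `ℓ_q` norm. -/
abbrev lqSpace (q : ℝ) : Type := PiLp (ENNReal.ofReal q) (fun _ : Fin 3 => ℝ)

/-- The vector `(x, y, z)` in `ℝ³` with the `ℓ_q` norm. -/
def vec3 (q : ℝ) (x y z : ℝ) : lqSpace q :=
  (WithLp.equiv (ENNReal.ofReal q) (∀ _ : Fin 3, ℝ)).symm ![x, y, z]

/-- `M₁ = span{e₁, e₂}`. -/
def subM₁ (q : ℝ) : Submodule ℝ (lqSpace q) :=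
  Submodule.span ℝ {vec3 q 1 0 0, vec3 q 0 1 0}

/-- `M₂ = span{e₁, e₃}`. -/
def subM₂ (q : ℝ) : Submodule ℝ (lqSpace q) :=
  Submodule.span ℝ {vec3 q 1 0 0, vec3 q 0 0 1}

/-!
On an `ℓ_q` sum both `‖·‖ ^ q` and its derivative split over the coordinates, hence so does `D_q`.
If `P v` is obtained from `v` by replacing the coordinates outside `s` by `0`, this gives the
Pythagorean identity `D_q(m, v) = D_q(m, P v) + D_q(P v, v)` for every `m` supported in `s`. Strict
convexity makes `D_q(m, P v)` positive for `m ≠ P v`, so `P v` is the Bregman projection, and by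
Euler's identity `D_q(P v, v)` is `1 - 1 / q` times the sum of `‖v i‖ ^ q` over `i ∉ s`. The
distance to an intersection of coordinate subspaces is therefore at most the sum of the distances.
-/

section DualityMap

variable {p : ℝ} {x : X}

theorem hasFDerivAt_dualityMap (hx : DifferentiableAt ℝ (fun y : X => ‖y‖ ^ p) x) :
    HasFDerivAt (fun y : X => 1 / p * ‖y‖ ^ p) (dualityMap p x) x :=
  (hx.const_mul (1 / p)).hasFDerivAt

-- Euler's identity for the `p`-homogeneous function `‖·‖ ^ p`, differentiated along `t ↦ t • x`.
theorem dualityMap_apply_self (hp : p ≠ 0) (hx : DifferentiableAt ℝ (fun y : X => ‖y‖ ^ p) x) :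
    dualityMap p x x = ‖x‖ ^ p := by
  have hray : HasDerivAt (fun t : ℝ => 1 / p * ‖t • x‖ ^ p) (dualityMap p x x) 1 := by
    have hline : HasDerivAt (fun t : ℝ => t • x) x 1 := by
      simpa using (hasDerivAt_id (1 : ℝ)).smul_const x
    exact HasFDerivAt.comp_hasDerivAt_of_eq 1 (hasFDerivAt_dualityMap hx) hline (one_smul ℝ x).symm
  have hpow : HasDerivAt (fun t : ℝ => 1 / p * (t ^ p * ‖x‖ ^ p)) (‖x‖ ^ p) 1 := by
    have h := ((Real.hasDerivAt_rpow_const (x := 1) (p := p) (Or.inl one_ne_zero)).mul_const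
      (‖x‖ ^ p)).const_mul (1 / p)
    rwa [Real.one_rpow, mul_one, ← mul_assoc, one_div_mul_cancel hp, one_mul] at h
  refine hray.unique (hpow.congr_of_eventuallyEq ?_)
  filter_upwards [lt_mem_nhds zero_lt_one] with t ht
  rw [norm_smul, Real.norm_of_nonneg ht.le, Real.mul_rpow ht.le (norm_nonneg x)]

end DualityMap

section BregmanDist

variable {p : ℝ} {a b : X}

@[simp]
theorem bregmanDist_self (p : ℝ) (x : X) : bregmanDist p x x = 0 := by
  simp [bregmanDist]

theorem bregmanDist_zero_left (hp : p ≠ 0) (hb : DifferentiableAt ℝ (fun y : X => ‖y‖ ^ p) b) :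
    bregmanDist p 0 b = (1 - 1 / p) * ‖b‖ ^ p := by
  rw [bregmanDist, zero_sub, map_neg, dualityMap_apply_self hp hb, norm_zero, Real.zero_rpow hp]
  ring

theorem strictConvexOn_norm_rpow [StrictConvexSpace ℝ X] (hp : 1 < p) :
    StrictConvexOn ℝ Set.univ (fun x : X => ‖x‖ ^ p) := by
  refine ⟨convex_univ, fun x _ y _ hxy s t hs ht hst => ?_⟩
  have hp₀ : 0 < p := zero_lt_one.trans hp
  simp only [smul_eq_mul]
  rcases eq_or_ne ‖x‖ ‖y‖ with hnorm | hnorm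
  · calc ‖s • x + t • y‖ ^ p < ‖x‖ ^ p :=
          Real.rpow_lt_rpow (norm_nonneg _)
            (norm_combo_lt_of_ne le_rfl hnorm.ge hxy hs ht hst) hp₀
      _ = s * ‖x‖ ^ p + t * ‖y‖ ^ p := by rw [← hnorm, ← add_mul, hst, one_mul]
  · calc ‖s • x + t • y‖ ^ p ≤ (s * ‖x‖ + t * ‖y‖) ^ p := by
          gcongr
          simpa only [norm_smul_of_nonneg hs.le, norm_smul_of_nonneg ht.le]
            using norm_add_le (s • x) (t • y)
      _ < s * ‖x‖ ^ p + t * ‖y‖ ^ p :=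
          (strictConvexOn_rpow hp).2 (norm_nonneg x) (norm_nonneg y) hnorm hs ht hst

theorem bregmanDist_pos [StrictConvexSpace ℝ X] (hp : 1 < p)
    (hb : DifferentiableAt ℝ (fun y : X => ‖y‖ ^ p) b) (hab : a ≠ b) :
    0 < bregmanDist p a b := by
  let f : ℝ → ℝ := fun t => 1 / p * ‖AffineMap.lineMap b a t‖ ^ p
  have hderiv : HasDerivAt f (dualityMap p b (a - b)) 0 :=
    HasFDerivAt.comp_hasDerivAt_of_eq 0 (hasFDerivAt_dualityMap hb)
      AffineMap.hasDerivAt_lineMap (AffineMap.lineMap_apply_zero b a).symm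
  have hconv : StrictConvexOn ℝ Set.univ f := by
    refine ⟨convex_univ, fun r _ u _ hru s t hs ht hst => ?_⟩
    have hne : AffineMap.lineMap b a r ≠ AffineMap.lineMap b a u :=
      (AffineMap.lineMap_injective ℝ hab.symm).ne hru
    have h := (strictConvexOn_norm_rpow hp).2 (Set.mem_univ _) (Set.mem_univ _) hne hs ht hst
    rw [← Convex.combo_affine_apply hst] at h
    have hp₀ : 0 < 1 / p := by positivity
    calc f (s • r + t • u) < 1 / p * _ := mul_lt_mul_of_pos_left h hp₀
      _ = s • f r + t • f u := by simp only [f, smul_eq_mul]; ring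
  have hslope := hconv.lt_slope_of_hasDerivAt (Set.mem_univ 0) (Set.mem_univ 1) one_pos hderiv
  simp only [slope_def_field, f, AffineMap.lineMap_apply_zero, AffineMap.lineMap_apply_one,
    sub_zero, div_one] at hslope
  exact sub_pos.mpr hslope

theorem bregmanDist_nonneg [StrictConvexSpace ℝ X] (hp : 1 < p)
    (hb : DifferentiableAt ℝ (fun y : X => ‖y‖ ^ p) b) : 0 ≤ bregmanDist p a b := by
  rcases eq_or_ne a b with rfl | hab
  · exact (bregmanDist_self p a).ge
  · exact (bregmanDist_pos hp hb hab).le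

theorem bregmanProj_eq_of_forall_lt {S : Set X} {x y : X} (hy : y ∈ S)
    (hlt : ∀ m ∈ S, m ≠ y → bregmanDist p y x < bregmanDist p m x) : bregmanProj p S x = y := by
  have hmin : ∀ m ∈ S, bregmanDist p y x ≤ bregmanDist p m x := fun m hm => by
    rcases eq_or_ne m y with rfl | hne
    · exact le_rfl
    · exact (hlt m hm hne).le
  obtain ⟨hmem, hproj⟩ := Classical.epsilon_spec
    (p := fun y => y ∈ S ∧ ∀ m ∈ S, bregmanDist p y x ≤ bregmanDist p m x) ⟨y, hy, hmin⟩
  by_contra hne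
  exact (hlt _ hmem hne).not_ge (hproj y hy)

/-- Linear Bregman regularity of a pair of subspaces: the Bregman distance to the intersection is
controlled by the larger of the Bregman distances to the two subspaces. -/
def IsLinearBregmanRegular (p : ℝ) (M N : Submodule ℝ X) : Prop :=
  ∃ κ > (0 : ℝ), ∀ v : X, bregmanDistSet p ((M ⊓ N : Submodule ℝ X) : Set X) v ≤
    κ * max (bregmanDistSet p (M : Set X) v) (bregmanDistSet p (N : Set X) v)

end BregmanDist

section PiLp

open scoped ENNReal

variable {ι : Type*} {E : ι → Type*} [∀ i, NormedAddCommGroup (E i)]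

theorem norm_rpow_eq_sum_norm_rpow [Fintype ι] {q : ℝ} (hq : 0 < q)
    (v : PiLp (ENNReal.ofReal q) E) : ‖v‖ ^ q = ∑ i, ‖v i‖ ^ q := by
  have hr : (ENNReal.ofReal q).toReal = q := ENNReal.toReal_ofReal hq.le
  rw [PiLp.norm_eq_sum (by rwa [hr]), hr, ← Real.rpow_mul (by positivity),
    one_div_mul_cancel hq.ne', Real.rpow_one]

/-- The coordinate projection onto the vectors supported in `s`: coordinates outside `s`
are replaced by `0`. -/
def coordProj [DecidableEq ι] {r : ℝ≥0∞} (s : Finset ι) (v : PiLp r E) : PiLp r E :=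
  WithLp.toLp r (s.piecewise v 0)

@[simp]
theorem coordProj_apply [DecidableEq ι] {r : ℝ≥0∞} (s : Finset ι) (v : PiLp r E) (i : ι) :
    coordProj s v i = if i ∈ s then v i else 0 :=
  rfl

variable [∀ i, NormedSpace ℝ (E i)]

section CoordSubspace

variable {r : ℝ≥0∞} {s t : Finset ι}

/-- The subspace of the vectors of an `ℓ_r` sum whose coordinates outside `s` vanish. -/
def coordSubspace (r : ℝ≥0∞) (E : ι → Type*) [∀ i, NormedAddCommGroup (E i)]
    [∀ i, NormedSpace ℝ (E i)] (s : Finset ι) : Submodule ℝ (PiLp r E) where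
  carrier := {v | ∀ i ∉ s, v i = 0}
  add_mem' hv hw i hi := by simp [hv i hi, hw i hi]
  zero_mem' _ _ := rfl
  smul_mem' c v hv i hi := by simp [hv i hi]

@[simp]
theorem mem_coordSubspace {v : PiLp r E} : v ∈ coordSubspace r E s ↔ ∀ i ∉ s, v i = 0 :=
  Iff.rfl

variable [DecidableEq ι]

theorem coordSubspace_inf :
    coordSubspace r E s ⊓ coordSubspace r E t = coordSubspace r E (s ∩ t) := by
  ext v
  simp only [Submodule.mem_inf, mem_coordSubspace, Finset.mem_inter]
  grind

theorem coordProj_mem (v : PiLp r E) : coordProj s v ∈ coordSubspace r E s :=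
  fun _ hi => if_neg hi

end CoordSubspace

section Bregman

variable [Fintype ι] {q : ℝ} [Fact (1 ≤ ENNReal.ofReal q)]

local notation "ℓq" => PiLp (ENNReal.ofReal q) E

theorem dualityMap_eq_sum_dualityMap (hq : 0 < q) {v : ℓq}
    (hv : ∀ i, DifferentiableAt ℝ (fun x : E i => ‖x‖ ^ q) (v i)) (w : ℓq) :
    dualityMap q v w = ∑ i, dualityMap q (v i) (w i) := by
  have hsum : HasFDerivAt (fun u : ℓq => ∑ i, 1 / q * ‖u i‖ ^ q)
      (∑ i, (dualityMap q (v i)).comp (PiLp.proj (𝕜 := ℝ) (ENNReal.ofReal q) E i)) v :=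
    HasFDerivAt.fun_sum fun i _ => HasFDerivAt.comp (g := fun x : E i => 1 / q * ‖x‖ ^ q) v
      (hasFDerivAt_dualityMap (hv i)) (PiLp.proj (𝕜 := ℝ) (ENNReal.ofReal q) E i).hasFDerivAt
  simp only [← Finset.mul_sum, ← norm_rpow_eq_sum_norm_rpow hq] at hsum
  rw [dualityMap, hsum.fderiv]
  simp only [sum_apply, ContinuousLinearMap.comp_apply, PiLp.proj_apply]

theorem bregmanDist_eq_sum_bregmanDist (hq : 0 < q) (u : ℓq) {v : ℓq}
    (hv : ∀ i, DifferentiableAt ℝ (fun x : E i => ‖x‖ ^ q) (v i)) :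
    bregmanDist q u v = ∑ i, bregmanDist q (u i) (v i) := by
  simp only [bregmanDist, norm_rpow_eq_sum_norm_rpow hq, dualityMap_eq_sum_dualityMap hq hv,
    PiLp.sub_apply, Finset.mul_sum, Finset.sum_sub_distrib]

theorem bregmanDist_piLp_pos [∀ i, StrictConvexSpace ℝ (E i)] (hq : 1 < q) {u v : ℓq}
    (hv : ∀ i, DifferentiableAt ℝ (fun x : E i => ‖x‖ ^ q) (v i)) (huv : u ≠ v) :
    0 < bregmanDist q u v := by
  obtain ⟨i, hi⟩ : ∃ i, u i ≠ v i := by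
    contrapose! huv
    exact PiLp.ext huv
  rw [bregmanDist_eq_sum_bregmanDist (zero_lt_one.trans hq) u hv]
  exact Finset.sum_pos' (fun j _ => bregmanDist_nonneg hq (hv j))
    ⟨i, Finset.mem_univ i, bregmanDist_pos hq (hv i) hi⟩

variable [DecidableEq ι] {s t : Finset ι}

theorem bregmanDist_coordProj (hq : 0 < q) (s : Finset ι) {v : ℓq}
    (hv : ∀ i, DifferentiableAt ℝ (fun x : E i => ‖x‖ ^ q) (v i)) :
    bregmanDist q (coordProj s v) v = (1 - 1 / q) * ∑ i ∈ sᶜ, ‖v i‖ ^ q := by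
  have hterm : ∀ i, bregmanDist q (coordProj s v i) (v i)
      = if i ∈ sᶜ then (1 - 1 / q) * ‖v i‖ ^ q else 0 := fun i => by
    by_cases hi : i ∈ s
    · simp [hi]
    · simpa [hi] using bregmanDist_zero_left hq.ne' (hv i)
  simp only [bregmanDist_eq_sum_bregmanDist hq _ hv, hterm, Finset.sum_ite_mem, Finset.univ_inter,
    Finset.mul_sum]

-- Coordinatewise: `i ∈ s` contributes `0` to the last summand, and `i ∉ s` contributes `0` to the
-- first.
theorem bregmanDist_eq_add_of_mem_coordSubspace (hq : 0 < q)
    (hE : ∀ i, Differentiable ℝ (fun x : E i => ‖x‖ ^ q)) {m : ℓq}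
    (hm : m ∈ coordSubspace (ENNReal.ofReal q) E s) (v : ℓq) :
    bregmanDist q m v = bregmanDist q m (coordProj s v) + bregmanDist q (coordProj s v) v := by
  simp only [bregmanDist_eq_sum_bregmanDist hq _ fun i => hE i _, ← Finset.sum_add_distrib]
  refine Finset.sum_congr rfl fun i _ => ?_
  by_cases hi : i ∈ s
  · simp [hi]
  · simp [hi, hm i hi]

variable [∀ i, StrictConvexSpace ℝ (E i)]

theorem bregmanProj_coordSubspace (hq : 1 < q)
    (hE : ∀ i, Differentiable ℝ (fun x : E i => ‖x‖ ^ q)) (s : Finset ι) (v : ℓq) :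
    bregmanProj q (coordSubspace (ENNReal.ofReal q) E s : Set ℓq) v = coordProj s v := by
  refine bregmanProj_eq_of_forall_lt (coordProj_mem v) fun m hm hne => ?_
  rw [bregmanDist_eq_add_of_mem_coordSubspace (zero_lt_one.trans hq) hE hm v]
  exact lt_add_of_pos_left _ (bregmanDist_piLp_pos hq (fun i => hE i _) hne)

theorem bregmanDistSet_coordSubspace (hq : 1 < q)
    (hE : ∀ i, Differentiable ℝ (fun x : E i => ‖x‖ ^ q)) (s : Finset ι) (v : ℓq) :
    bregmanDistSet q (coordSubspace (ENNReal.ofReal q) E s : Set ℓq) v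
      = (1 - 1 / q) * ∑ i ∈ sᶜ, ‖v i‖ ^ q := by
  rw [bregmanDistSet, bregmanProj_coordSubspace hq hE,
    bregmanDist_coordProj (zero_lt_one.trans hq) s fun i => hE i _]

theorem bregmanDistSet_coordSubspace_inter_le (hq : 1 < q)
    (hE : ∀ i, Differentiable ℝ (fun x : E i => ‖x‖ ^ q)) (s t : Finset ι) (v : ℓq) :
    bregmanDistSet q (coordSubspace (ENNReal.ofReal q) E (s ∩ t) : Set ℓq) v
      ≤ bregmanDistSet q (coordSubspace (ENNReal.ofReal q) E s : Set ℓq) v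
        + bregmanDistSet q (coordSubspace (ENNReal.ofReal q) E t : Set ℓq) v := by
  have hq' : 0 ≤ 1 - 1 / q := sub_nonneg.mpr ((div_le_one (zero_lt_one.trans hq)).mpr hq.le)
  simp only [bregmanDistSet_coordSubspace hq hE, ← mul_add]
  gcongr
  rw [Finset.compl_inter, ← Finset.sum_union_inter]
  exact le_add_of_nonneg_right (by positivity)

theorem statement9_general (hq : 1 < q)
    (hE : ∀ i, Differentiable ℝ (fun x : E i => ‖x‖ ^ q)) (s t : Finset ι) :
    let M := coordSubspace (ENNReal.ofReal q) E s
    let N := coordSubspace (ENNReal.ofReal q) E t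
    (∀ v : ℓq,
      bregmanProj q (M : Set ℓq) v = coordProj s v ∧
      bregmanProj q (N : Set ℓq) v = coordProj t v ∧
      bregmanProj q ((M ⊓ N : Submodule ℝ ℓq) : Set ℓq) v = coordProj (s ∩ t) v ∧
      bregmanDistSet q (M : Set ℓq) v = (1 - 1 / q) * ∑ i ∈ sᶜ, ‖v i‖ ^ q ∧
      bregmanDistSet q (N : Set ℓq) v = (1 - 1 / q) * ∑ i ∈ tᶜ, ‖v i‖ ^ q ∧
      bregmanDistSet q ((M ⊓ N : Submodule ℝ ℓq) : Set ℓq) v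
        = (1 - 1 / q) * ∑ i ∈ (s ∩ t)ᶜ, ‖v i‖ ^ q) ∧
    (∀ v : ℓq, bregmanDistSet q ((M ⊓ N : Submodule ℝ ℓq) : Set ℓq) v ≤
      2 * max (bregmanDistSet q (M : Set ℓq) v) (bregmanDistSet q (N : Set ℓq) v)) ∧
    IsLinearBregmanRegular q M N := by
  intro M N
  have hMN : M ⊓ N = coordSubspace (ENNReal.ofReal q) E (s ∩ t) := coordSubspace_inf
  have hle (v : ℓq) : bregmanDistSet q ((M ⊓ N : Submodule ℝ ℓq) : Set ℓq) v ≤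
      2 * max (bregmanDistSet q (M : Set ℓq) v) (bregmanDistSet q (N : Set ℓq) v) := by
    rw [hMN, two_mul]
    exact (bregmanDistSet_coordSubspace_inter_le hq hE s t v).trans
      (add_le_add (le_max_left _ _) (le_max_right _ _))
  refine ⟨fun v => ?_, hle, 2, two_pos, hle⟩
  rw [hMN]
  exact ⟨bregmanProj_coordSubspace hq hE s v, bregmanProj_coordSubspace hq hE t v,
    bregmanProj_coordSubspace hq hE (s ∩ t) v, bregmanDistSet_coordSubspace hq hE s v,
    bregmanDistSet_coordSubspace hq hE t v, bregmanDistSet_coordSubspace hq hE (s ∩ t) v⟩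

end Bregman

end PiLp

section ThreeSpace

variable (q : ℝ)

theorem vec3_apply (x y z : ℝ) (i : Fin 3) : vec3 q x y z i = ![x, y, z] i :=
  rfl

theorem subM₁_eq_coordSubspace :
    subM₁ q = coordSubspace (ENNReal.ofReal q) (fun _ : Fin 3 => ℝ) {0, 1} := by
  ext v
  rw [subM₁, Submodule.mem_span_pair]
  constructor
  · rintro ⟨a, b, rfl⟩
    simp [Fin.forall_fin_succ, vec3_apply]
  · intro hv
    refine ⟨v 0, v 1, PiLp.ext fun i => ?_⟩
    fin_cases i <;> simp [vec3_apply, hv 2]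

theorem subM₂_eq_coordSubspace :
    subM₂ q = coordSubspace (ENNReal.ofReal q) (fun _ : Fin 3 => ℝ) {0, 2} := by
  ext v
  rw [subM₂, Submodule.mem_span_pair]
  constructor
  · rintro ⟨a, b, rfl⟩
    simp [Fin.forall_fin_succ, vec3_apply]
  · intro hv
    refine ⟨v 0, v 2, PiLp.ext fun i => ?_⟩
    fin_cases i <;> simp [vec3_apply, hv 1]

theorem coordProj_vec3 (s : Finset (Fin 3)) (x y z : ℝ) :
    coordProj s (vec3 q x y z)
      = vec3 q (if 0 ∈ s then x else 0) (if 1 ∈ s then y else 0) (if 2 ∈ s then z else 0) := by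
  ext i
  fin_cases i <;> rfl

end ThreeSpace

theorem statement9 (q : ℝ) (hq1 : 1 < q) (hqne : q ≠ 2) [Fact (1 ≤ ENNReal.ofReal q)] :
    (∀ x y z : ℝ,
      bregmanProj q (subM₁ q : Set (lqSpace q)) (vec3 q x y z) = vec3 q x y 0 ∧
      bregmanProj q (subM₂ q : Set (lqSpace q)) (vec3 q x y z) = vec3 q x 0 z ∧
      bregmanProj q ((subM₁ q ⊓ subM₂ q : Submodule ℝ (lqSpace q)) : Set (lqSpace q))
          (vec3 q x y z) = vec3 q x 0 0 ∧
      bregmanDistSet q (subM₁ q : Set (lqSpace q)) (vec3 q x y z) = (1 - 1 / q) * |z| ^ q ∧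
      bregmanDistSet q (subM₂ q : Set (lqSpace q)) (vec3 q x y z) = (1 - 1 / q) * |y| ^ q ∧
      bregmanDistSet q ((subM₁ q ⊓ subM₂ q : Submodule ℝ (lqSpace q)) : Set (lqSpace q))
          (vec3 q x y z) = (1 - 1 / q) * (|y| ^ q + |z| ^ q)) ∧
    (∀ v : lqSpace q,
      bregmanDistSet q ((subM₁ q ⊓ subM₂ q : Submodule ℝ (lqSpace q)) : Set (lqSpace q)) v ≤
        2 * max (bregmanDistSet q (subM₁ q : Set (lqSpace q)) v)
                (bregmanDistSet q (subM₂ q : Set (lqSpace q)) v)) ∧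
    (∃ κ > (0 : ℝ), ∀ v : lqSpace q,
      bregmanDistSet q ((subM₁ q ⊓ subM₂ q : Submodule ℝ (lqSpace q)) : Set (lqSpace q)) v ≤
        κ * max (bregmanDistSet q (subM₁ q : Set (lqSpace q)) v)
                (bregmanDistSet q (subM₂ q : Set (lqSpace q)) v)) := by
  obtain ⟨hproj, hle, hreg⟩ := statement9_general (E := fun _ : Fin 3 => ℝ) hq1
    (fun _ => differentiable_norm_rpow hq1) {0, 1} {0, 2}
  rw [subM₁_eq_coordSubspace, subM₂_eq_coordSubspace]
  refine ⟨fun x y z => ?_, hle, hreg⟩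
  have h₁ : ({0, 1} : Finset (Fin 3))ᶜ = {2} := rfl
  have h₂ : ({0, 2} : Finset (Fin 3))ᶜ = {1} := rfl
  have h₁₂ : (({0, 1} : Finset (Fin 3)) ∩ {0, 2})ᶜ = {1, 2} := rfl
  have h := hproj (vec3 q x y z)
  rw [h₁, h₂, h₁₂] at h
  simpa [coordProj_vec3, vec3_apply] using h
end
end
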